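/- Approximation-to-the-identity property of the Poisson-type kernel: Let 1 ≤ p < ∞ and F ∈ L^p(ℝ^d; ℝ^{d+1}). Then ‖(ℙ_t ∗ F) − F‖_{L^p(ℝ^d)} → 0 as t → 0⁺. Moreover, (ℙ_t ∗ F)(x) → F(x) as t → 0⁺ at every Lebesgue point x ∈ ℝ^d of F. -/

import Mathlib

open MeasureTheory Filter Set
open scoped ENNReal NNReal Topology

noncomputable section

abbrev Ed (d : ℕ) : Type := EuclideanSpace ℝ (Fin d)

/-- The surface measure `ω_d` of the unit sphere in `ℝ^{d+1}`. -/
def sphereVol (d : ℕ) : ℝ :=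
  ((d : ℝ) + 1) * (volume (Metric.ball (0 : EuclideanSpace ℝ (Fin (d+1))) 1)).toReal

/-- The Poisson kernel `p_t(x)` for the upper half-space `ℝ^d × (0,∞)`. -/
def poissonKernelHalfSpace (d : ℕ) (t : ℝ) (x : Ed d) : ℝ :=
  (2 / sphereVol d) * t / (‖x‖ ^ 2 + t ^ 2) ^ (((d : ℝ) + 1) / 2)

/-- The (componentwise) Poisson integral `u(x,t) = (p_t ∗ f)(x)` of a vector field. -/
def poissonInt (d m : ℕ) (f : Ed d → Ed m) (x : Ed d) (t : ℝ) : Ed m :=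
  ∫ y, poissonKernelHalfSpace d t y • f (x - y)

/-- The vector `(x, t) ∈ ℝ^{d+1}`. -/
def snocVec (d : ℕ) (x : Ed d) (t : ℝ) : Fin (d + 1) → ℝ := Fin.snoc (fun i => x i) t

/-- The entries `𝔭_t^{jk}(x)` of the Poisson-type matrix kernel `ℙ_t`. -/
def pEntry (d : ℕ) (t : ℝ) (j k : Fin (d + 1)) (x : Ed d) : ℝ :=
  (2 * ((d : ℝ) + 1) / sphereVol d) * t * snocVec d x t j *
    snocVec d x t k / (‖x‖ ^ 2 + t ^ 2) ^ (((d : ℝ) + 3) / 2)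

/-- The Poisson-type integral `U(x,t) = (ℙ_t ∗ F)(x)`, the convolution taken in the sense of
matrix–vector multiplication. -/
def pConv (d : ℕ) (t : ℝ) (F : Ed d → Ed (d + 1)) (x : Ed d) : Ed (d + 1) :=
  (EuclideanSpace.equiv (Fin (d + 1)) ℝ).symm
    (fun i => ∫ y, ∑ j, pEntry d t i j y * F (x - y) j)

/-- The field `F = (f, 0) : ℝ^d → ℝ^{d+1}` obtained by appending a zero component. -/
def appendZero (d : ℕ) (f : Ed d → Ed d) : Ed d → Ed (d + 1) :=
  fun y => (EuclideanSpace.equiv (Fin (d + 1)) ℝ).symm (Fin.snoc (fun i => f y i) 0)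

open scoped InnerProductSpace

/-!
With `u = (y, 1)`, the kernel at `t = 1` is `(2(d+1)/ω_d) |u|^{-(d+1)}` times the orthogonal
projection onto the line through `u`. In the coordinates `z = r u` of `ℝ^{d+1}` Lebesgue measure
is `|r|^d dr dy`, so the unit ball cuts the line through `u` in a set of mass
`(2/(d+1)) |u|^{-(d+1)}`. The integral of the kernel is therefore `d+1` times the average of the
projections onto the lines through the points of the unit ball. By rotation invariance this average
is `id/(d+1)`, so `∫ ℙ_1 = id`.

The rest holds for the dilates of any operator-valued kernel `K`: if `K` is integrable,
`K_t ∗ F - (∫ K) F` is small in `L^p` because translations are continuous there; if `|K|` has a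
symmetric decreasing integrable majorant, then that majorant is a superposition of indicators of
balls, and the averages of `|F - F(x)|` over balls around a Lebesgue point `x` are bounded and tend
to zero with the radius.
-/

/-- The value at `x` of the convolution `K_t ∗ F`, where `K_t y = t⁻ⁿ K (t⁻¹ y)` is the dilate of an
operator-valued kernel `K` on an `n`-dimensional space, written after the substitution `y ↦ t y`
so that the normalising factor `t⁻ⁿ` disappears. -/
def dilatedConv {E V W : Type*} [NormedAddCommGroup E] [NormedSpace ℝ E] [MeasurableSpace E]
    [NormedAddCommGroup V] [NormedSpace ℝ V] [NormedAddCommGroup W] [NormedSpace ℝ W]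
    (μ : Measure E) (K : E → V →L[ℝ] W) (F : E → V) (t : ℝ) (x : E) : W :=
  ∫ y, K y (F (x - t • y)) ∂μ

lemma lintegral_rpow_le_measure_rpow_mul {α : Type*} [MeasurableSpace α] (ν : Measure α)
    {g : α → ℝ≥0∞} (hg : AEMeasurable g ν) {q : ℝ} (hq : 1 ≤ q) :
    (∫⁻ y, g y ∂ν) ^ q ≤ ν univ ^ (q - 1) * ∫⁻ y, g y ^ q ∂ν := by
  have hq0 : 0 < q := by linarith
  have h := ENNReal.lintegral_mul_norm_pow_le (p := 1 - q⁻¹) (q := q⁻¹) (f := fun _ => 1)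
    (g := fun y => g y ^ q) (μ := ν) aemeasurable_const (hg.pow_const q)
    (sub_nonneg.2 (inv_le_one_of_one_le₀ hq)) (by positivity) (by ring)
  simp only [ENNReal.one_rpow, one_mul, ← ENNReal.rpow_mul, mul_inv_cancel₀ hq0.ne',
    ENNReal.rpow_one, lintegral_const] at h
  calc (∫⁻ y, g y ∂ν) ^ q
      ≤ (ν univ ^ (1 - q⁻¹) * (∫⁻ y, g y ^ q ∂ν) ^ q⁻¹) ^ q := by gcongr
    _ = ν univ ^ (q - 1) * ∫⁻ y, g y ^ q ∂ν := by
      rw [ENNReal.mul_rpow_of_nonneg _ _ hq0.le, ← ENNReal.rpow_mul, ← ENNReal.rpow_mul,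
        inv_mul_cancel₀ hq0.ne', ENNReal.rpow_one, sub_mul, one_mul, inv_mul_cancel₀ hq0.ne']

lemma eLpNorm_translate_sub_le {G V : Type*} [AddGroup G] [MeasurableSpace G] [MeasurableAdd G]
    {μ : Measure G} [μ.IsAddRightInvariant] [NormedAddCommGroup V] {F : G → V} {p : ℝ≥0∞}
    (hF : AEStronglyMeasurable F μ) (hp : 1 ≤ p) (y : G) :
    eLpNorm (fun x => F (x - y) - F x) p μ ≤ 2 * eLpNorm F p μ := by
  have h_shift := measurePreserving_sub_right μ y
  calc eLpNorm (fun x => F (x - y) - F x) p μ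
      ≤ eLpNorm (F ∘ (· - y)) p μ + eLpNorm F p μ :=
        eLpNorm_sub_le (hF.comp_measurePreserving h_shift) hF hp
    _ = 2 * eLpNorm F p μ := by rw [eLpNorm_comp_measurePreserving hF h_shift, two_mul]

lemma lintegral_enorm_rpow_toReal {α V : Type*} [MeasurableSpace α] [NormedAddCommGroup V]
    {ν : Measure α} {p : ℝ≥0∞} (hp : p ≠ 0) (hp' : p ≠ ∞) (f : α → V) :
    ∫⁻ x, ‖f x‖ₑ ^ p.toReal ∂ν = eLpNorm f p ν ^ p.toReal := by
  rw [lintegral_rpow_enorm_eq_rpow_eLpNorm' (ENNReal.toReal_pos hp hp'), eLpNorm_eq_eLpNorm' hp hp']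

section ApproximateIdentity

variable {E V W : Type*} [NormedAddCommGroup E] [NormedSpace ℝ E] [FiniteDimensional ℝ E]
  [MeasurableSpace E] [BorelSpace E] {μ : Measure E} [μ.IsAddHaarMeasure]
  [NormedAddCommGroup V] {p : ℝ≥0∞}

lemma lintegral_comp_smul (h : E → ℝ≥0∞) {t : ℝ} (ht : t ≠ 0) :
    ∫⁻ y, h (t • y) ∂μ = ENNReal.ofReal |(t ^ Module.finrank ℝ E)⁻¹| * ∫⁻ y, h y ∂μ := by
  have h_emb : MeasurableEmbedding (t • · : E → E) :=
    (Homeomorph.smulOfNeZero t ht).measurableEmbedding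
  rw [← h_emb.lintegral_map, Measure.map_addHaar_smul μ ht, lintegral_smul_measure, smul_eq_mul]

lemma quasiMeasurePreserving_smul {t : ℝ} (ht : t ≠ 0) :
    Measure.QuasiMeasurePreserving (fun y : E => t • y) μ μ :=
  ⟨measurable_const_smul t, by
    rw [Measure.map_addHaar_smul μ ht]; exact Measure.smul_absolutelyContinuous⟩

lemma quasiMeasurePreserving_sub_smul (x : E) {t : ℝ} (ht : t ≠ 0) :
    Measure.QuasiMeasurePreserving (fun y => x - t • y) μ μ :=
  (quasiMeasurePreserving_sub_left μ x).comp (quasiMeasurePreserving_smul ht)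

section KernelEstimate

variable [NormedSpace ℝ V] [NormedAddCommGroup W] [NormedSpace ℝ W]
  {K : E → V →L[ℝ] W} {F : E → V} {x : E} {t : ℝ}

lemma enorm_dilatedConv_sub_le (hK : Integrable K μ) (hF : AEStronglyMeasurable F μ)
    (ht : t ≠ 0) :
    ‖dilatedConv μ K F t x - (∫ y, K y ∂μ) (F x)‖ₑ ≤
      ∫⁻ y, ‖K y‖ₑ * ‖F (x - t • y) - F x‖ₑ ∂μ := by
  rcases eq_or_ne (∫⁻ y, ‖K y‖ₑ * ‖F (x - t • y) - F x‖ₑ ∂μ) ∞ with h_top | h_fin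
  · exact h_top ▸ le_top
  have h_bound (y : E) : ‖K y (F (x - t • y) - F x)‖ₑ ≤ ‖K y‖ₑ * ‖F (x - t • y) - F x‖ₑ :=
    (K y).le_opENorm _
  have h_meas : AEStronglyMeasurable (fun y => F (x - t • y)) μ :=
    hF.comp_quasiMeasurePreserving (quasiMeasurePreserving_sub_smul x ht)
  have h_const : Integrable (fun y => K y (F x)) μ := hK.apply_continuousLinearMap (F x)
  have h_diff : Integrable (fun y => K y (F (x - t • y) - F x)) μ :=
    ⟨(ContinuousLinearMap.id ℝ (V →L[ℝ] W)).aestronglyMeasurable_comp₂ hK.1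
      (h_meas.sub aestronglyMeasurable_const),
      (lintegral_mono h_bound).trans_lt h_fin.lt_top⟩
  have h_eq : dilatedConv μ K F t x - (∫ y, K y ∂μ) (F x) =
      ∫ y, K y (F (x - t • y) - F x) ∂μ := by
    have h_sum : Integrable (fun y => K y (F (x - t • y))) μ :=
      (h_diff.add h_const).congr (ae_of_all _ fun y => by simp)
    rw [dilatedConv, ContinuousLinearMap.integral_apply hK, ← integral_sub h_sum h_const]
    simp only [map_sub]
  rw [h_eq]
  exact (enorm_integral_le_lintegral_enorm _).trans (lintegral_mono h_bound)

end KernelEstimate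

lemma continuous_eLpNorm_translate_sub {F : E → V} (hF : MemLp F p μ) (hp : 1 ≤ p) (hp' : p ≠ ∞) :
    Continuous fun y => eLpNorm (fun x => F (x - y) - F x) p μ := by
  have : Fact (1 ≤ p) := ⟨hp⟩
  have : Fact (p ≠ ∞) := ⟨hp'⟩
  have h_eq (y : E) : ‖(DomAddAct.mk (-y) +ᵥ hF.toLp F) - hF.toLp F‖ₑ =
      eLpNorm (fun x => F (x - y) - F x) p μ := by
    rw [DomAddAct.mk_vadd_toLp, ← MemLp.toLp_sub, Lp.enorm_toLp]
    congr! 3 with x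
    simp [sub_eq_neg_add]
  simp_rw [← h_eq]
  fun_prop

lemma tendsto_eLpNorm_translate_sub {F : E → V} (hF : MemLp F p μ) (hp : 1 ≤ p) (hp' : p ≠ ∞) :
    Tendsto (fun y => eLpNorm (fun x => F (x - y) - F x) p μ) (𝓝 0) (𝓝 0) := by
  simpa using (continuous_eLpNorm_translate_sub hF hp hp').tendsto 0

lemma lintegral_rpow_lintegral_translate_sub_le (ν : Measure E) [IsFiniteMeasure ν]
    {F : E → V} (hF : AEStronglyMeasurable F μ) {q : ℝ} (hq : 1 ≤ q) (t : ℝ) :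
    ∫⁻ x, (∫⁻ y, ‖F (x - t • y) - F x‖ₑ ∂ν) ^ q ∂μ ≤
      ν univ ^ (q - 1) * ∫⁻ y, ∫⁻ x, ‖F (x - t • y) - F x‖ₑ ^ q ∂μ ∂ν := by
  have h_meas : AEStronglyMeasurable (fun z : E × E => F (z.1 - t • z.2) - F z.1) (μ.prod ν) := by
    have h_sub : Measure.QuasiMeasurePreserving (fun z : E × E => z.1 - t • z.2) (μ.prod ν) μ :=
      QuasiMeasurePreserving.prod_of_left (by fun_prop) (ae_of_all _ fun y =>
        (measurePreserving_sub_right μ (t • y)).quasiMeasurePreserving)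
    exact (hF.comp_quasiMeasurePreserving h_sub).sub hF.comp_fst
  calc ∫⁻ x, (∫⁻ y, ‖F (x - t • y) - F x‖ₑ ∂ν) ^ q ∂μ
      ≤ ∫⁻ x, ν univ ^ (q - 1) * ∫⁻ y, ‖F (x - t • y) - F x‖ₑ ^ q ∂ν ∂μ :=
        lintegral_mono_ae <| h_meas.prodMk_left.mono fun x hx =>
          lintegral_rpow_le_measure_rpow_mul ν hx.enorm hq
    _ = ν univ ^ (q - 1) * ∫⁻ x, ∫⁻ y, ‖F (x - t • y) - F x‖ₑ ^ q ∂ν ∂μ :=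
        lintegral_const_mul' _ _ (by finiteness)
    _ = ν univ ^ (q - 1) * ∫⁻ y, ∫⁻ x, ‖F (x - t • y) - F x‖ₑ ^ q ∂μ ∂ν := by
        rw [lintegral_lintegral_swap (h_meas.enorm.pow_const q)]

lemma tendsto_lintegral_eLpNorm_translate_sub_smul (ν : Measure E) [IsFiniteMeasure ν] {F : E → V}
    (hF : MemLp F p μ) (hp : 1 ≤ p) (hp' : p ≠ ∞) {q : ℝ} (hq : 0 < q) :
    Tendsto (fun t : ℝ => ∫⁻ y, eLpNorm (fun x => F (x - t • y) - F x) p μ ^ q ∂ν)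
      (𝓝 0) (𝓝 0) := by
  have h_ptwise (y : E) : Tendsto (fun t : ℝ => eLpNorm (fun x => F (x - t • y) - F x) p μ ^ q)
      (𝓝 0) (𝓝 0) := by
    have h_smul : Tendsto (fun t : ℝ => t • y) (𝓝 0) (𝓝 0) :=
      (continuous_id.smul continuous_const).tendsto' 0 0 (zero_smul ℝ y)
    have h := ((tendsto_eLpNorm_translate_sub hF hp hp').comp h_smul).ennrpow_const q
    rwa [ENNReal.zero_rpow_of_pos hq] at h
  have h_meas (t : ℝ) : Measurable fun y => eLpNorm (fun x => F (x - t • y) - F x) p μ ^ q :=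
    ((continuous_eLpNorm_translate_sub hF hp hp').measurable.comp
      (measurable_const_smul t)).pow_const q
  simpa using tendsto_lintegral_filter_of_dominated_convergence
    (fun _ => (2 * eLpNorm F p μ) ^ q) (.of_forall h_meas)
    (.of_forall fun t => ae_of_all _ fun y => by
      gcongr; exact eLpNorm_translate_sub_le hF.1 hp _)
    (by have := hF.2; simp only [lintegral_const]; finiteness)
    (ae_of_all ν h_ptwise)

section Convergence

variable [NormedSpace ℝ V] [NormedAddCommGroup W] [NormedSpace ℝ W] {K : E → V →L[ℝ] W} {F : E → V}

lemma eLpNorm_dilatedConv_sub_rpow_le (hK : Integrable K μ) (hF : AEStronglyMeasurable F μ)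
    (hp : 1 ≤ p) (hp' : p ≠ ∞) {t : ℝ} (ht : t ≠ 0) :
    eLpNorm (fun x => dilatedConv μ K F t x - (∫ y, K y ∂μ) (F x)) p μ ^ p.toReal ≤
      (∫⁻ y, ‖K y‖ₑ ∂μ) ^ (p.toReal - 1) *
        ∫⁻ y, eLpNorm (fun x => F (x - t • y) - F x) p μ ^ p.toReal
          ∂(μ.withDensity fun y => ‖K y‖ₑ) := by
  have hp0 : p ≠ 0 := (zero_lt_one.trans_le hp).ne'
  have hq : 1 ≤ p.toReal := by simpa using ENNReal.toReal_mono hp' hp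
  have : IsFiniteMeasure (μ.withDensity fun y => ‖K y‖ₑ) := isFiniteMeasure_withDensity hK.2.ne
  have h_le (x : E) : ‖dilatedConv μ K F t x - (∫ y, K y ∂μ) (F x)‖ₑ ≤
      ∫⁻ y, ‖F (x - t • y) - F x‖ₑ ∂(μ.withDensity fun y => ‖K y‖ₑ) := by
    rw [lintegral_withDensity_eq_lintegral_mul_non_measurable₀ μ hK.1.enorm
      (ae_of_all _ fun _ => enorm_lt_top)]
    exact enorm_dilatedConv_sub_le hK hF ht
  have h_jensen := lintegral_rpow_lintegral_translate_sub_le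
    (μ.withDensity fun y => ‖K y‖ₑ) hF hq t
  rw [withDensity_apply _ .univ, setLIntegral_univ] at h_jensen
  simp_rw [← lintegral_enorm_rpow_toReal hp0 hp']
  exact (lintegral_mono fun x => by gcongr; exact h_le x).trans h_jensen

theorem tendsto_eLpNorm_dilatedConv_sub (hK : Integrable K μ) (hF : MemLp F p μ) (hp : 1 ≤ p)
    (hp' : p ≠ ∞) :
    Tendsto (fun t => eLpNorm (fun x => dilatedConv μ K F t x - (∫ y, K y ∂μ) (F x)) p μ)
      (𝓝[≠] 0) (𝓝 0) := by
  have hq : 1 ≤ p.toReal := by simpa using ENNReal.toReal_mono hp' hp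
  have hq0 : 0 < p.toReal := by linarith
  have : IsFiniteMeasure (μ.withDensity fun y => ‖K y‖ₑ) := isFiniteMeasure_withDensity hK.2.ne
  have h_bound : Tendsto (fun t : ℝ => (∫⁻ y, ‖K y‖ₑ ∂μ) ^ (p.toReal - 1) *
      ∫⁻ y, eLpNorm (fun x => F (x - t • y) - F x) p μ ^ p.toReal ∂(μ.withDensity fun y => ‖K y‖ₑ))
      (𝓝[≠] 0) (𝓝 0) := by
    have h := ENNReal.Tendsto.const_mul (a := (∫⁻ y, ‖K y‖ₑ ∂μ) ^ (p.toReal - 1))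
      (tendsto_lintegral_eLpNorm_translate_sub_smul (μ.withDensity fun y => ‖K y‖ₑ) hF hp hp' hq0)
      (.inr (ENNReal.rpow_ne_top_of_nonneg (sub_nonneg.2 hq) hK.2.ne))
    exact (mul_zero (_ : ℝ≥0∞) ▸ h).mono_left nhdsWithin_le_nhds
  have h_pow : Tendsto (fun t =>
      eLpNorm (fun x => dilatedConv μ K F t x - (∫ y, K y ∂μ) (F x)) p μ ^ p.toReal)
      (𝓝[≠] 0) (𝓝 0) :=
    tendsto_of_tendsto_of_tendsto_of_le_of_le' tendsto_const_nhds h_bound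
      (.of_forall fun _ => zero_le) (eventually_mem_nhdsWithin.mono fun t ht =>
        eLpNorm_dilatedConv_sub_rpow_le hK hF.1 hp hp' ht)
  have h_root := h_pow.ennrpow_const p.toReal⁻¹
  simpa only [← ENNReal.rpow_mul, mul_inv_cancel₀ hq0.ne', ENNReal.rpow_one,
    ENNReal.zero_rpow_of_pos (inv_pos.2 hq0)] using h_root

end Convergence

end ApproximateIdentity

/-- A nonnegative function `φ` on a normed space is symmetric decreasing (and vanishes at infinity)
when its superlevel sets at positive heights are open balls centred at the origin. -/
def IsSymmDecreasing {E : Type*} [NormedAddCommGroup E] (φ : E → ℝ) : Prop :=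
  0 ≤ φ ∧ ∀ s > 0, ∃ r, {y | s < φ y} = Metric.ball 0 r

section SymmDecreasingKernel

variable {E : Type*} [NormedAddCommGroup E] [NormedSpace ℝ E] [FiniteDimensional ℝ E]
  [MeasurableSpace E] [BorelSpace E] {μ : Measure E} [μ.IsAddHaarMeasure]

lemma setLIntegral_ball_comp_smul (h : E → ℝ≥0∞) {t : ℝ} (ht : 0 < t) (r : ℝ) :
    ∫⁻ y in Metric.ball 0 r, h (t • y) ∂μ =
      ENNReal.ofReal |(t ^ Module.finrank ℝ E)⁻¹| * ∫⁻ y in Metric.ball 0 (t * r), h y ∂μ := by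
  have h_ball : (t • ·) ⁻¹' Metric.ball (0 : E) (t * r) = Metric.ball 0 r := by
    ext y; simp [norm_smul, abs_of_pos ht, ht]
  rw [← lintegral_indicator measurableSet_ball, ← lintegral_indicator measurableSet_ball,
    ← lintegral_comp_smul _ ht.ne', ← h_ball]
  rfl

lemma laverage_ball_comp_smul (h : E → ℝ≥0∞) {t : ℝ} (ht : 0 < t) (r : ℝ) :
    ⨍⁻ y in Metric.ball 0 r, h (t • y) ∂μ = ⨍⁻ y in Metric.ball 0 (t * r), h y ∂μ := by
  have h_vol := setLIntegral_ball_comp_smul (μ := μ) (fun _ => 1) ht r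
  simp only [setLIntegral_one] at h_vol
  rw [setLAverage_eq, setLAverage_eq, setLIntegral_ball_comp_smul h ht, h_vol,
    ENNReal.mul_div_mul_left _ _ (by positivity) ENNReal.ofReal_ne_top]

lemma withDensity_comp_smul_ball (h : E → ℝ≥0∞) {t : ℝ} (ht : 0 < t) (r : ℝ) :
    μ.withDensity (fun y => h (t • y)) (Metric.ball 0 r) =
      μ (Metric.ball 0 r) * ⨍⁻ y in Metric.ball 0 (t * r), h y ∂μ := by
  rw [withDensity_apply _ measurableSet_ball, ← laverage_ball_comp_smul h ht,
    measure_mul_setLAverage _ measure_ball_lt_top.ne]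

lemma withDensity_comp_smul_ball_le {h : E → ℝ≥0∞} {C : ℝ≥0∞}
    (h_le : ∀ r > 0, ⨍⁻ y in Metric.ball 0 r, h y ∂μ ≤ C) {t : ℝ} (ht : 0 < t) (r : ℝ) :
    μ.withDensity (fun y => h (t • y)) (Metric.ball 0 r) ≤ C * μ (Metric.ball 0 r) := by
  rcases le_or_gt r 0 with hr | hr
  · simp [Metric.ball_eq_empty.2 hr]
  rw [withDensity_comp_smul_ball h ht, mul_comm C]
  gcongr
  exact h_le _ (mul_pos ht hr)

lemma tendsto_withDensity_comp_smul_ball {h : E → ℝ≥0∞}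
    (h_lim : Tendsto (fun r => ⨍⁻ y in Metric.ball 0 r, h y ∂μ) (𝓝[>] 0) (𝓝 0)) (r : ℝ) :
    Tendsto (fun t : ℝ => μ.withDensity (fun y => h (t • y)) (Metric.ball 0 r))
      (𝓝[>] 0) (𝓝 0) := by
  rcases le_or_gt r 0 with hr | hr
  · simp [Metric.ball_eq_empty.2 hr]
  have h_rescale : Tendsto (fun t => t * r) (𝓝[>] 0) (𝓝[>] 0) :=
    tendsto_nhdsWithin_iff.2
      ⟨((continuous_mul_const r).tendsto' 0 0 (zero_mul r)).mono_left nhdsWithin_le_nhds,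
        eventually_mem_nhdsWithin.mono fun t ht => mul_pos ht hr⟩
  have h_avg := ENNReal.Tendsto.const_mul (h_lim.comp h_rescale)
    (.inr (measure_ball_lt_top (μ := μ) (x := 0) (r := r)).ne)
  rw [mul_zero] at h_avg
  exact h_avg.congr' (eventually_mem_nhdsWithin.mono fun t ht =>
    (withDensity_comp_smul_ball h ht r).symm)

lemma lintegral_ofReal_mul_comp_smul {φ : E → ℝ} (hφ : 0 ≤ φ) (hφ_meas : AEMeasurable φ μ)
    {h : E → ℝ≥0∞} (h_meas : AEMeasurable h μ) {t : ℝ} (ht : t ≠ 0) :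
    ∫⁻ y, ENNReal.ofReal (φ y) * h (t • y) ∂μ =
      ∫⁻ s in Ioi 0, μ.withDensity (fun y => h (t • y)) {y | s < φ y} := by
  have h_smul : AEMeasurable (fun y => h (t • y)) μ :=
    h_meas.comp_quasiMeasurePreserving (quasiMeasurePreserving_smul ht)
  rw [← lintegral_eq_lintegral_meas_lt _ (ae_of_all _ hφ)
      (hφ_meas.mono_ac (withDensity_absolutelyContinuous _ _)),
    lintegral_withDensity_eq_lintegral_mul₀ h_smul hφ_meas.ennreal_ofReal]
  simp only [Pi.mul_apply, mul_comm]

/-- By layer cake, the weighted integral is a superposition of averages over balls. -/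
lemma tendsto_lintegral_mul_comp_smul_of_tendsto_laverage {φ : E → ℝ} (hφ : IsSymmDecreasing φ)
    (hφ_int : Integrable φ μ) {h : E → ℝ≥0∞} (h_meas : AEMeasurable h μ) {C : ℝ≥0∞} (hC : C ≠ ∞)
    (h_le : ∀ r > 0, ⨍⁻ y in Metric.ball 0 r, h y ∂μ ≤ C)
    (h_lim : Tendsto (fun r => ⨍⁻ y in Metric.ball 0 r, h y ∂μ) (𝓝[>] 0) (𝓝 0)) :
    Tendsto (fun t : ℝ => ∫⁻ y, ENNReal.ofReal (φ y) * h (t • y) ∂μ) (𝓝[>] 0) (𝓝 0) := by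
  have h_bound_fin : ∫⁻ s in Ioi 0, C * μ {y | s < φ y} ≠ ∞ := by
    rw [lintegral_const_mul' _ _ hC,
      ← lintegral_eq_lintegral_meas_lt μ (ae_of_all _ hφ.1) hφ_int.aemeasurable]
    exact ENNReal.mul_ne_top hC hφ_int.lintegral_lt_top.ne
  have h_antitone (t : ℝ) :
      Antitone fun s : ℝ => μ.withDensity (fun y => h (t • y)) {y | s < φ y} :=
    fun _ _ hs => measure_mono fun _ hy => hs.trans_lt hy
  have h_lim_int := tendsto_lintegral_filter_of_dominated_convergence
    (μ := volume.restrict (Ioi (0 : ℝ))) (fun s => C * μ {y | s < φ y})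
    (.of_forall fun t => (h_antitone t).measurable)
    (eventually_mem_nhdsWithin.mono fun t ht =>
      ae_restrict_of_forall_mem measurableSet_Ioi fun s hs => by
        obtain ⟨r, hr⟩ := hφ.2 s hs
        exact hr ▸ withDensity_comp_smul_ball_le h_le ht r)
    h_bound_fin (ae_restrict_of_forall_mem measurableSet_Ioi fun s hs => by
      obtain ⟨r, hr⟩ := hφ.2 s hs
      exact hr ▸ tendsto_withDensity_comp_smul_ball h_lim r)
  rw [lintegral_zero] at h_lim_int
  exact h_lim_int.congr' (eventually_mem_nhdsWithin.mono fun t ht =>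
    (lintegral_ofReal_mul_comp_smul hφ.1 hφ_int.aemeasurable h_meas (ne_of_gt ht)).symm)

end SymmDecreasingKernel

lemma setLAverage_enorm_le_one_add {α V : Type*} [MeasurableSpace α] [NormedAddCommGroup V]
    {ν : Measure α} {p : ℝ≥0∞} (hp : 1 ≤ p) (hp' : p ≠ ∞) (f : α → V) (s : Set α) :
    ⨍⁻ y in s, ‖f y‖ₑ ∂ν ≤ 1 + eLpNorm f p ν ^ p.toReal / ν s := by
  have hq : 1 ≤ p.toReal := by simpa using ENNReal.toReal_mono hp' hp
  have h_le (a : ℝ≥0∞) : a ≤ 1 + a ^ p.toReal := by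
    rcases le_total a 1 with ha | ha
    · exact ha.trans le_self_add
    · exact (ENNReal.le_rpow_self_of_one_le ha hq).trans le_add_self
  calc ⨍⁻ y in s, ‖f y‖ₑ ∂ν
      ≤ (∫⁻ y in s, (1 + ‖f y‖ₑ ^ p.toReal) ∂ν) / ν s := by
        rw [setLAverage_eq]; gcongr; exact h_le _
    _ = ν s / ν s + (∫⁻ y in s, ‖f y‖ₑ ^ p.toReal ∂ν) / ν s := by
        rw [lintegral_add_left measurable_const, setLIntegral_one, ENNReal.add_div]
    _ ≤ 1 + eLpNorm f p ν ^ p.toReal / ν s := by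
        rw [← lintegral_enorm_rpow_toReal (zero_lt_one.trans_le hp).ne' hp']
        gcongr
        · exact ENNReal.div_self_le_one
        · exact Measure.restrict_le_self

section LebesguePointAverages

variable {X V : Type*} [PseudoMetricSpace X] [ProperSpace X] [MeasurableSpace X]
  {ν : Measure X} [IsLocallyFiniteMeasure ν] [NormedAddCommGroup V] {F : X → V} {p : ℝ≥0∞} {x : X}

lemma tendsto_laverage_enorm_sub_of_tendsto_average (hF : MemLp F p ν) (hp : 1 ≤ p)
    (hx : Tendsto (fun r => ⨍ y in Metric.ball x r, ‖F y - F x‖ ∂ν) (𝓝[>] 0) (𝓝 0)) :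
    Tendsto (fun r => ⨍⁻ y in Metric.ball x r, ‖F y - F x‖ₑ ∂ν) (𝓝[>] 0) (𝓝 0) := by
  have h_int (r : ℝ) : IntegrableOn (fun y => ‖F y - F x‖) (Metric.ball x r) ν :=
    ((((hF.locallyIntegrable hp).sub (locallyIntegrable_const (F x))).integrableOn_isCompact
      (isCompact_closedBall x r)).mono_set Metric.ball_subset_closedBall).norm
  have h_eq (r : ℝ) : ENNReal.ofReal (⨍ y in Metric.ball x r, ‖F y - F x‖ ∂ν) =
      ⨍⁻ y in Metric.ball x r, ‖F y - F x‖ₑ ∂ν := by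
    rw [ofReal_setAverage (h_int r) (ae_of_all _ fun _ => norm_nonneg _), setLAverage_eq]
    simp only [ofReal_norm]
  simpa only [h_eq, ENNReal.ofReal_zero] using ENNReal.tendsto_ofReal hx

lemma exists_forall_laverage_ball_le [ν.IsOpenPosMeasure] (hF : MemLp F p ν) (hp : 1 ≤ p)
    (hp' : p ≠ ∞)
    (hx : Tendsto (fun r => ⨍⁻ y in Metric.ball x r, ‖F y - F x‖ₑ ∂ν) (𝓝[>] 0) (𝓝 0)) :
    ∃ C ≠ ∞, ∀ r > 0, ⨍⁻ y in Metric.ball x r, ‖F y - F x‖ₑ ∂ν ≤ C := by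
  obtain ⟨δ, hδ, h_small⟩ := mem_nhdsGT_iff_exists_Ioo_subset.1 (hx.eventually_le_const one_pos)
  have h_ball_pos : ν (Metric.ball x δ) ≠ 0 := (Metric.measure_ball_pos ν x hδ).ne'
  refine ⟨1 + ((1 + eLpNorm F p ν ^ p.toReal / ν (Metric.ball x δ)) + ‖F x‖ₑ), ?_,
    fun r hr => ?_⟩
  · have := hF.2
    finiteness
  rcases lt_or_ge r δ with hrδ | hrδ
  · exact (h_small ⟨hr, hrδ⟩).trans le_self_add
  calc ⨍⁻ y in Metric.ball x r, ‖F y - F x‖ₑ ∂ν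
      ≤ ⨍⁻ y in Metric.ball x r, (‖F y‖ₑ + ‖F x‖ₑ) ∂ν :=
        lintegral_mono fun y => enorm_sub_le
    _ = ⨍⁻ y in Metric.ball x r, ‖F y‖ₑ ∂ν + ‖F x‖ₑ := by
        have h_const := setLAverage_const (Metric.measure_ball_pos ν x hr).ne'
          measure_ball_lt_top.ne ‖F x‖ₑ
        exact (lintegral_add_right _ measurable_const).trans (congrArg (_ + ·) h_const)
    _ ≤ (1 + eLpNorm F p ν ^ p.toReal / ν (Metric.ball x δ)) + ‖F x‖ₑ := by
        gcongr
        refine (setLAverage_enorm_le_one_add hp hp' F _).trans ?_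
        gcongr
    _ ≤ _ := le_add_self

end LebesguePointAverages

section LebesguePoint

variable {E V W : Type*} [NormedAddCommGroup E] [NormedSpace ℝ E] [FiniteDimensional ℝ E]
  [MeasurableSpace E] [BorelSpace E] {μ : Measure E} [μ.IsAddHaarMeasure]
  [NormedAddCommGroup V] {p : ℝ≥0∞} {F : E → V} {x : E}

lemma laverage_ball_comp_sub_left (h : E → ℝ≥0∞) (x : E) (r : ℝ) :
    ⨍⁻ y in Metric.ball 0 r, h (x - y) ∂μ = ⨍⁻ y in Metric.ball x r, h y ∂μ := by
  have h_ball : Metric.ball (0 : E) r = (x - ·) ⁻¹' Metric.ball x r := by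
    ext y; simp [dist_eq_norm]
  have h_mp := Measure.measurePreserving_sub_left μ x
  rw [setLAverage_eq, setLAverage_eq, h_ball,
    h_mp.setLIntegral_comp_preimage_emb (Homeomorph.subLeft x).measurableEmbedding,
    h_mp.measure_preimage measurableSet_ball.nullMeasurableSet]

variable [NormedSpace ℝ V] [NormedAddCommGroup W] [NormedSpace ℝ W] {K : E → V →L[ℝ] W}

theorem tendsto_dilatedConv_of_tendsto_average {φ : E → ℝ} (hφ : IsSymmDecreasing φ)
    (hφ_int : Integrable φ μ) (hK : AEStronglyMeasurable K μ) (hK_le : ∀ y, ‖K y‖ ≤ φ y)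
    (hF : MemLp F p μ) (hp : 1 ≤ p) (hp' : p ≠ ∞)
    (hx : Tendsto (fun r => ⨍ y in Metric.ball x r, ‖F y - F x‖ ∂μ) (𝓝[>] 0) (𝓝 0)) :
    Tendsto (fun t => dilatedConv μ K F t x) (𝓝[>] 0) (𝓝 ((∫ y, K y ∂μ) (F x))) := by
  have h_lim := tendsto_laverage_enorm_sub_of_tendsto_average hF hp hx
  obtain ⟨C, hC, h_le⟩ := exists_forall_laverage_ball_le hF hp hp' h_lim
  have h_meas : AEMeasurable (fun y => ‖F (x - y) - F x‖ₑ) μ :=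
    ((hF.1.comp_quasiMeasurePreserving (quasiMeasurePreserving_sub_left μ x)).sub
      aestronglyMeasurable_const).enorm
  simp_rw [← laverage_ball_comp_sub_left (fun y => ‖F y - F x‖ₑ) x] at h_lim h_le
  have h_major := tendsto_lintegral_mul_comp_smul_of_tendsto_laverage hφ hφ_int h_meas hC h_le h_lim
  refine tendsto_iff_edist_tendsto_0.2 <| tendsto_of_tendsto_of_tendsto_of_le_of_le'
    tendsto_const_nhds h_major (.of_forall fun _ => zero_le)
    (eventually_mem_nhdsWithin.mono fun t ht => ?_)
  rw [edist_eq_enorm_sub]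
  refine (enorm_dilatedConv_sub_le (hφ_int.mono' hK (ae_of_all _ hK_le)) hF.1
    (ne_of_gt ht)).trans ?_
  gcongr with y
  rw [← ofReal_norm]
  exact ENNReal.ofReal_le_ofReal (hK_le y)

lemma integrable_kernel_apply_comp_sub_smul {C : ℝ} (hK : Integrable K μ) (hK_le : ∀ y, ‖K y‖ ≤ C)
    (hF : MemLp F p μ) (hp : 1 ≤ p) (hp' : p ≠ ∞) {t : ℝ} (ht : t ≠ 0) :
    Integrable (fun y => K y (F (x - t • y))) μ := by
  have hq : 1 ≤ p.toReal := by simpa using ENNReal.toReal_mono hp' hp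
  have h_pow : Integrable (fun y => ‖F (x - t • y)‖ ^ p.toReal) μ :=
    ((hF.integrable_norm_rpow (zero_lt_one.trans_le hp).ne' hp').comp_sub_left x).comp_smul ht
  have h_le (a : ℝ) (ha : 0 ≤ a) : a ≤ 1 + a ^ p.toReal := by
    rcases le_total a 1 with ha1 | ha1
    · exact ha1.trans (le_add_of_nonneg_right (by positivity))
    · linarith [Real.self_le_rpow_of_one_le ha1 hq]
  refine (hK.norm.add (h_pow.const_mul C)).mono'
    ((ContinuousLinearMap.id ℝ (V →L[ℝ] W)).aestronglyMeasurable_comp₂ hK.1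
      (hF.1.comp_quasiMeasurePreserving (quasiMeasurePreserving_sub_smul x ht)))
    (ae_of_all _ fun y => ?_)
  calc ‖K y (F (x - t • y))‖ ≤ ‖K y‖ * (1 + ‖F (x - t • y)‖ ^ p.toReal) :=
        (K y).le_opNorm_of_le (h_le _ (norm_nonneg _))
    _ = ‖K y‖ + ‖K y‖ * ‖F (x - t • y)‖ ^ p.toReal := by ring
    _ ≤ ‖K y‖ + C * ‖F (x - t • y)‖ ^ p.toReal := by gcongr; exact hK_le y

end LebesguePoint

section SphericalAverage

variable {E : Type*} [NormedAddCommGroup E] [InnerProductSpace ℝ E] [FiniteDimensional ℝ E]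
  [MeasurableSpace E] [BorelSpace E]

lemma setLIntegral_ball_inner_sq_div_norm_sq_congr {v w : E} (h : ‖v‖ = ‖w‖) (r : ℝ) :
    ∫⁻ z in Metric.ball 0 r, ENNReal.ofReal (⟪v, z⟫_ℝ ^ 2 / ‖z‖ ^ 2) =
      ∫⁻ z in Metric.ball 0 r, ENNReal.ofReal (⟪w, z⟫_ℝ ^ 2 / ‖z‖ ^ 2) := by
  obtain ⟨ρ, hρ⟩ : ∃ ρ : E ≃ₗᵢ[ℝ] E, ρ v = w := ⟨_, Submodule.reflection_sub h⟩
  have h_rot := ρ.measurePreserving.setLIntegral_comp_preimage_emb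
    ρ.toHomeomorph.measurableEmbedding (fun z => ENNReal.ofReal (⟪w, z⟫_ℝ ^ 2 / ‖z‖ ^ 2))
    (Metric.ball 0 r)
  have h_inner (z : E) : ⟪w, ρ z⟫_ℝ = ⟪v, z⟫_ℝ := hρ ▸ ρ.inner_map_map v z
  simpa only [h_inner, LinearIsometryEquiv.norm_map, LinearIsometryEquiv.preimage_ball,
    map_zero] using h_rot

lemma finrank_mul_setLIntegral_ball_inner_sq_div_norm_sq (v : E) (r : ℝ) :
    Module.finrank ℝ E * ∫⁻ z in Metric.ball 0 r, ENNReal.ofReal (⟪v, z⟫_ℝ ^ 2 / ‖z‖ ^ 2) =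
      ENNReal.ofReal (‖v‖ ^ 2) * volume (Metric.ball (0 : E) r) := by
  rcases eq_or_ne v 0 with rfl | hv
  · simp
  have := nontrivial_of_ne v 0 hv
  set b := stdOrthonormalBasis ℝ E
  have h_sum {z : E} (hz : z ≠ 0) :
      ∑ i, ENNReal.ofReal (⟪‖v‖ • b i, z⟫_ℝ ^ 2 / ‖z‖ ^ 2) = ENNReal.ofReal (‖v‖ ^ 2) := by
    rw [← ENNReal.ofReal_sum_of_nonneg fun _ _ => by positivity, ← Finset.sum_div]
    simp only [real_inner_smul_left, mul_pow]
    rw [← Finset.mul_sum, b.sum_sq_inner_right, mul_div_cancel_right₀ _ (by positivity)]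
  calc Module.finrank ℝ E * ∫⁻ z in Metric.ball 0 r, ENNReal.ofReal (⟪v, z⟫_ℝ ^ 2 / ‖z‖ ^ 2)
      = ∑ i, ∫⁻ z in Metric.ball 0 r, ENNReal.ofReal (⟪‖v‖ • b i, z⟫_ℝ ^ 2 / ‖z‖ ^ 2) := by
        have h_norm (i) : ‖v‖ = ‖‖v‖ • b i‖ := by simp [norm_smul]
        simp only [← setLIntegral_ball_inner_sq_div_norm_sq_congr (h_norm _), Finset.sum_const,
          Finset.card_univ, Fintype.card_fin, nsmul_eq_mul]
    _ = ∫⁻ z in Metric.ball 0 r, ∑ i, ENNReal.ofReal (⟪‖v‖ • b i, z⟫_ℝ ^ 2 / ‖z‖ ^ 2) :=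
        (lintegral_finsetSum _ fun i _ => by fun_prop).symm
    _ = ENNReal.ofReal (‖v‖ ^ 2) * volume (Metric.ball (0 : E) r) := by
        rw [lintegral_congr_ae (ae_restrict_of_ae <| (Measure.ae_ne volume 0).mono fun z hz =>
          h_sum hz), setLIntegral_const]

end SphericalAverage

section HomogeneousCoordinates

variable {d : ℕ}

/-- The point `(y, 1)` of the affine hyperplane `z_{d+1} = 1` in `ℝ^{d+1}`; the Poisson-type kernel
at `t = 1` is a multiple of the projection onto the line it spans. -/
def affineLift (d : ℕ) (y : Ed d) : Ed (d + 1) := WithLp.toLp 2 (snocVec d y 1)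

lemma continuous_affineLift : Continuous (affineLift d) := by
  unfold affineLift snocVec
  fun_prop

lemma norm_toLp_snocVec_sq (y : Ed d) (t : ℝ) :
    ‖WithLp.toLp 2 (snocVec d y t)‖ ^ 2 = ‖y‖ ^ 2 + t ^ 2 := by
  simp [EuclideanSpace.norm_sq_eq, Fin.sum_univ_castSucc, snocVec]

lemma norm_affineLift_sq (y : Ed d) : ‖affineLift d y‖ ^ 2 = ‖y‖ ^ 2 + 1 := by
  rw [affineLift, norm_toLp_snocVec_sq, one_pow]

lemma one_le_norm_affineLift (y : Ed d) : 1 ≤ ‖affineLift d y‖ := by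
  rw [← one_le_sq_iff₀ (norm_nonneg _), norm_affineLift_sq]
  exact le_add_of_nonneg_left (sq_nonneg _)

lemma norm_affineLift_pos (y : Ed d) : 0 < ‖affineLift d y‖ :=
  one_pos.trans_le (one_le_norm_affineLift y)

lemma snocVec_smul (y : Ed d) (t : ℝ) : snocVec d (t • y) t = t • snocVec d y 1 := by
  ext i
  refine Fin.lastCases ?_ (fun j => ?_) i <;> simp [snocVec]

lemma lintegral_eq_lintegral_snocVec {f : Ed (d + 1) → ℝ≥0∞} (hf : Measurable f) :
    ∫⁻ z, f z = ∫⁻ t : ℝ, ∫⁻ y, f (WithLp.toLp 2 (snocVec d y t)) := by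
  have h_split := (volume_preserving_piFinSuccAbove (fun _ => ℝ) (Fin.last d)).symm
  have h_prod : Measurable fun z : ℝ × (Fin d → ℝ) =>
      f (WithLp.toLp 2 ((Fin.last d).insertNth z.1 z.2)) := by fun_prop
  calc ∫⁻ z, f z = ∫⁻ z : Fin (d + 1) → ℝ, f (WithLp.toLp 2 z) :=
        ((PiLp.volume_preserving_toLp _).lintegral_comp hf).symm
    _ = ∫⁻ z : ℝ × (Fin d → ℝ), f (WithLp.toLp 2 ((Fin.last d).insertNth z.1 z.2)) :=
        (h_split.lintegral_comp (hf.comp (by fun_prop))).symm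
    _ = ∫⁻ t : ℝ, ∫⁻ y : Fin d → ℝ, f (WithLp.toLp 2 (Fin.snoc y t)) := by
        rw [Measure.volume_eq_prod, lintegral_prod _ h_prod.aemeasurable]
        simp only [Fin.insertNth_last']
    _ = ∫⁻ t : ℝ, ∫⁻ y, f (WithLp.toLp 2 (snocVec d y t)) := by
        congr! 2 with t
        exact ((PiLp.volume_preserving_ofLp _).lintegral_comp (by fun_prop)).symm

lemma lintegral_eq_lintegral_smul_affineLift {f : Ed (d + 1) → ℝ≥0∞} (hf : Measurable f) :
    ∫⁻ z, f z = ∫⁻ y, ∫⁻ r : ℝ, ENNReal.ofReal (|r| ^ d) * f (r • affineLift d y) := by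
  have h_scale {r : ℝ} (hr : r ≠ 0) : ∫⁻ y, f (WithLp.toLp 2 (snocVec d y r)) =
      ∫⁻ y, ENNReal.ofReal (|r| ^ d) * f (r • affineLift d y) := by
    have h := lintegral_comp_smul (μ := volume)
      (fun y => f (WithLp.toLp 2 (snocVec d y r))) hr
    simp only [snocVec_smul, WithLp.toLp_smul, finrank_euclideanSpace_fin] at h
    rw [lintegral_const_mul' _ _ ENNReal.ofReal_ne_top]
    unfold affineLift
    rw [h, ← mul_assoc, ← ENNReal.ofReal_mul (by positivity), ← abs_pow, ← abs_mul,
      mul_inv_cancel₀ (pow_ne_zero d hr), abs_one, ENNReal.ofReal_one, one_mul]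
  rw [lintegral_eq_lintegral_snocVec hf, lintegral_congr_ae
    ((Measure.ae_ne volume 0).mono fun r hr => h_scale hr), lintegral_lintegral_swap]
  have := (continuous_affineLift (d := d)).measurable
  fun_prop

lemma lintegral_abs_pow_ball (d : ℕ) {a : ℝ} (ha : 0 ≤ a) :
    ∫⁻ r in Metric.ball 0 a, ENNReal.ofReal (|r| ^ d) =
      ENNReal.ofReal (2 / (d + 1) * a ^ (d + 1)) := by
  have h_cont : Continuous fun r : ℝ => |r| ^ d := by fun_prop
  have h_right : ∫ r in 0..a, |r| ^ d = a ^ (d + 1) / (d + 1) := by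
    rw [intervalIntegral.integral_of_le ha, ← uIoc_of_le ha]
    simpa [abs_of_nonneg ha] using integral_pow_abs_sub_uIoc (a := 0) (b := a) d
  have h_left : ∫ r in -a..0, |r| ^ d = a ^ (d + 1) / (d + 1) := by
    simpa [h_right] using (intervalIntegral.integral_comp_neg (a := 0) (b := a) (|·| ^ d)).symm
  rw [← ofReal_integral_eq_lintegral_ofReal
      ((h_cont.integrableOn_Icc (a := -a) (b := a)).mono_set (by
        rw [Real.ball_zero_eq_Ioo]; exact Ioo_subset_Icc_self))
      (ae_of_all _ fun r => by positivity),
    Real.ball_zero_eq_Ioo, ← integral_Ioc_eq_integral_Ioo,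
    ← intervalIntegral.integral_of_le (by linarith),
    ← intervalIntegral.integral_add_adjacent_intervals (h_cont.intervalIntegrable _ 0)
      (h_cont.intervalIntegrable 0 _), h_left, h_right]
  ring_nf

lemma setLIntegral_unitBall_eq_lintegral_affineLift {g : Ed (d + 1) → ℝ≥0∞} (hg : Measurable g)
    (hg_smul : ∀ r : ℝ, r ≠ 0 → ∀ z, g (r • z) = g z) :
    ∫⁻ z in Metric.ball 0 1, g z =
      ∫⁻ y, ENNReal.ofReal (2 / (d + 1) / ‖affineLift d y‖ ^ (d + 1)) * g (affineLift d y) := by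
  rw [← lintegral_indicator measurableSet_ball,
    lintegral_eq_lintegral_smul_affineLift (hg.indicator measurableSet_ball)]
  congr! 2 with y
  have h_pos := norm_affineLift_pos y
  have h_ray {r : ℝ} (hr : r ≠ 0) : ENNReal.ofReal (|r| ^ d) *
      (Metric.ball 0 1).indicator g (r • affineLift d y) =
        (Metric.ball 0 ‖affineLift d y‖⁻¹).indicator
          (fun r => ENNReal.ofReal (|r| ^ d) * g (affineLift d y)) r := by
    have h_mem : r • affineLift d y ∈ Metric.ball 0 1 ↔ r ∈ Metric.ball 0 ‖affineLift d y‖⁻¹ := by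
      rw [mem_ball_zero_iff, mem_ball_zero_iff, norm_smul, ← one_div, lt_div_iff₀ h_pos]
    by_cases hr_mem : r ∈ Metric.ball 0 ‖affineLift d y‖⁻¹
    · rw [indicator_of_mem (h_mem.2 hr_mem), indicator_of_mem hr_mem, hg_smul r hr]
    · rw [indicator_of_notMem (h_mem.not.2 hr_mem), indicator_of_notMem hr_mem, mul_zero]
  rw [lintegral_congr_ae ((Measure.ae_ne volume 0).mono fun r hr => h_ray hr),
    lintegral_indicator measurableSet_ball, lintegral_mul_const _ (by fun_prop),
    lintegral_abs_pow_ball d (by positivity), inv_pow, div_eq_mul_inv (2 / _)]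

lemma lintegral_inner_affineLift_sq_div_norm_pow (v : Ed (d + 1)) :
    ∫⁻ y, ENNReal.ofReal (⟪v, affineLift d y⟫_ℝ ^ 2 / ‖affineLift d y‖ ^ (d + 3)) =
      ENNReal.ofReal (‖v‖ ^ 2 / 2) * volume (Metric.ball (0 : Ed (d + 1)) 1) := by
  have h_ball := finrank_mul_setLIntegral_ball_inner_sq_div_norm_sq v 1
  rw [setLIntegral_unitBall_eq_lintegral_affineLift (by fun_prop) fun r hr z => by
    rw [real_inner_smul_right, norm_smul, mul_pow, mul_pow, Real.norm_eq_abs, sq_abs,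
      mul_div_mul_left _ _ (pow_ne_zero 2 hr)], finrank_euclideanSpace_fin] at h_ball
  have h_eq (y : Ed d) :
      ENNReal.ofReal (⟪v, affineLift d y⟫_ℝ ^ 2 / ‖affineLift d y‖ ^ (d + 3)) =
        ENNReal.ofReal ((d + 1) / 2) *
          (ENNReal.ofReal (2 / (d + 1) / ‖affineLift d y‖ ^ (d + 1)) *
            ENNReal.ofReal (⟪v, affineLift d y⟫_ℝ ^ 2 / ‖affineLift d y‖ ^ 2)) := by
    have h_pos := norm_affineLift_pos y
    rw [← ENNReal.ofReal_mul (by positivity), ← ENNReal.ofReal_mul (by positivity)]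
    congr 1
    field_simp
    ring
  have h_half : ENNReal.ofReal ((d + 1) / 2) = ENNReal.ofReal (1 / 2) * (d + 1 : ℕ) := by
    rw [← ENNReal.ofReal_natCast, ← ENNReal.ofReal_mul (by positivity)]
    push_cast
    ring_nf
  simp_rw [h_eq]
  rw [lintegral_const_mul' _ _ ENNReal.ofReal_ne_top, h_half, mul_assoc, h_ball, ← mul_assoc,
    ← ENNReal.ofReal_mul (by positivity), one_div_mul_eq_div]

end HomogeneousCoordinates

lemma isSymmetric_integral {α E : Type*} [MeasurableSpace α] {ν : Measure α}
    [NormedAddCommGroup E] [InnerProductSpace ℝ E] [CompleteSpace E] {T : α → E →L[ℝ] E}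
    (hT : Integrable T ν) (h_symm : ∀ a, (T a).toLinearMap.IsSymmetric) :
    (∫ a, T a ∂ν).toLinearMap.IsSymmetric := by
  intro v w
  rw [ContinuousLinearMap.coe_coe, ContinuousLinearMap.integral_apply hT,
    ContinuousLinearMap.integral_apply hT, real_inner_comm,
    ← integral_inner (hT.apply_continuousLinearMap v),
    ← integral_inner (hT.apply_continuousLinearMap w)]
  exact integral_congr_ae (ae_of_all _ fun a => (real_inner_comm _ _).trans (h_symm a v w))

section PoissonTypeKernel

variable {d : ℕ}

/-- The Poisson-type kernel at `t = 1`, as an operator-valued function: a multiple of the rank-one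
operator `v ↦ ⟪u, v⟫ u` with `u = (y, 1)`. -/
def pKernel (d : ℕ) (y : Ed d) : Ed (d + 1) →L[ℝ] Ed (d + 1) :=
  (2 * (d + 1) / sphereVol d / ‖affineLift d y‖ ^ (d + 3)) •
    InnerProductSpace.rankOne ℝ (affineLift d y) (affineLift d y)

lemma sphereVol_pos (d : ℕ) : 0 < sphereVol d :=
  mul_pos d.cast_add_one_pos <|
    ENNReal.toReal_pos (Metric.measure_ball_pos volume _ one_pos).ne' measure_ball_lt_top.ne

lemma continuous_pKernel : Continuous (pKernel d) := by
  have h_lift : Continuous (affineLift d) := continuous_affineLift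
  have h_ne (y : Ed d) : ‖affineLift d y‖ ^ (d + 3) ≠ 0 := (pow_pos (norm_affineLift_pos y) _).ne'
  exact (continuous_const.div (h_lift.norm.pow _) h_ne).smul
    (((InnerProductSpace.rankOne ℝ).continuous.comp h_lift).clm_apply h_lift)

lemma norm_pKernel (y : Ed d) :
    ‖pKernel d y‖ = 2 * (d + 1) / sphereVol d / ‖affineLift d y‖ ^ (d + 1) := by
  have h_pos := norm_affineLift_pos y
  have h_vol := sphereVol_pos d
  rw [pKernel, norm_smul, InnerProductSpace.norm_rankOne, Real.norm_of_nonneg (by positivity)]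
  field_simp
  ring

lemma norm_pKernel_le (y : Ed d) : ‖pKernel d y‖ ≤ 2 * (d + 1) / sphereVol d := by
  have h_vol := sphereVol_pos d
  rw [norm_pKernel]
  exact div_le_self (by positivity) (one_le_pow₀ (one_le_norm_affineLift y))

lemma isSymmDecreasing_norm_pKernel : IsSymmDecreasing fun y => ‖pKernel d y‖ := by
  refine ⟨fun _ => norm_nonneg _, fun s hs => ?_⟩
  have h_vol := sphereVol_pos d
  set c := 2 * (d + 1) / sphereVol d
  have hc : 0 ≤ c / s := by positivity
  set ρ := (c / s) ^ ((d + 1 : ℕ) : ℝ)⁻¹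
  have hρ : ρ ^ (d + 1) = c / s := Real.rpow_inv_natCast_pow hc d.succ_ne_zero
  have hρ0 : 0 ≤ ρ := by positivity
  refine ⟨√(ρ ^ 2 - 1), ?_⟩
  ext y
  have h_pos := norm_affineLift_pos y
  change s < ‖pKernel d y‖ ↔ _
  rw [norm_pKernel, lt_div_comm₀ hs (by positivity), ← hρ,
    pow_lt_pow_iff_left₀ h_pos.le hρ0 d.succ_ne_zero, ← pow_lt_pow_iff_left₀ h_pos.le hρ0
    two_ne_zero, norm_affineLift_sq, mem_ball_zero_iff, Real.lt_sqrt (norm_nonneg y),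
    lt_sub_iff_add_lt]

lemma integrable_pKernel : Integrable (pKernel d) := by
  have h_pow (y : Ed d) :
      ‖affineLift d y‖ ^ (d + 1) = (1 + ‖y‖ ^ 2) ^ (((d : ℝ) + 1) / 2) := by
    rw [add_comm 1, ← norm_affineLift_sq, ← Real.rpow_natCast, ← Real.rpow_natCast,
      ← Real.rpow_mul (norm_nonneg _)]
    push_cast
    ring_nf
  have h_decay : Integrable fun y : Ed d => (1 + ‖y‖ ^ 2) ^ (-((d : ℝ) + 1) / 2) :=
    integrable_rpow_neg_one_add_norm_sq (by simp)
  refine (h_decay.const_mul (2 * (d + 1) / sphereVol d)).mono'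
    continuous_pKernel.aestronglyMeasurable (ae_of_all _ fun y => le_of_eq ?_)
  rw [norm_pKernel, h_pow, neg_div, Real.rpow_neg (by positivity), div_eq_mul_inv]

lemma inner_integral_pKernel_apply_self (v : Ed (d + 1)) :
    ⟪(∫ y, pKernel d y) v, v⟫_ℝ = ‖v‖ ^ 2 := by
  have h_vol : (volume (Metric.ball (0 : Ed (d + 1)) 1)).toReal ≠ 0 :=
    (ENNReal.toReal_pos (Metric.measure_ball_pos volume _ one_pos).ne' measure_ball_lt_top.ne).ne'
  have h_cont : Continuous fun y =>
      ⟪v, affineLift d y⟫_ℝ ^ 2 / ‖affineLift d y‖ ^ (d + 3) := by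
    have h_lift : Continuous (affineLift d) := continuous_affineLift
    exact ((continuous_const.inner h_lift).pow 2).div (h_lift.norm.pow _) fun y =>
      (pow_pos (norm_affineLift_pos y) _).ne'
  have h_quad (y : Ed d) : ⟪v, pKernel d y v⟫_ℝ = 2 * (d + 1) / sphereVol d *
      (⟪v, affineLift d y⟫_ℝ ^ 2 / ‖affineLift d y‖ ^ (d + 3)) := by
    simp only [pKernel, smul_apply, InnerProductSpace.rankOne_apply,
      real_inner_smul_right, real_inner_comm v]
    ring
  rw [real_inner_comm, ContinuousLinearMap.integral_apply integrable_pKernel,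
    ← integral_inner (integrable_pKernel.apply_continuousLinearMap v)]
  simp_rw [h_quad]
  rw [integral_const_mul, integral_eq_lintegral_of_nonneg_ae (ae_of_all _ fun y => by positivity)
    h_cont.aestronglyMeasurable, lintegral_inner_affineLift_sq_div_norm_pow, ENNReal.toReal_mul,
    ENNReal.toReal_ofReal (by positivity), sphereVol]
  field_simp

lemma integral_pKernel : ∫ y, pKernel d y = ContinuousLinearMap.id ℝ (Ed (d + 1)) := by
  have h_symm : (∫ y, pKernel d y).toLinearMap.IsSymmetric :=
    isSymmetric_integral integrable_pKernel fun y =>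
      (InnerProductSpace.isSymmetric_rankOne_self _).smul (conj_trivial _)
  have h_zero := (h_symm.sub LinearMap.IsSymmetric.id).inner_map_self_eq_zero.1 fun v => by
    simp [inner_sub_left, inner_integral_pKernel_apply_self]
  exact ContinuousLinearMap.coe_injective (sub_eq_zero.1 h_zero)

end PoissonTypeKernel

section PConv

variable {d : ℕ} {t : ℝ}

lemma pEntry_eq (t : ℝ) (i j : Fin (d + 1)) (y : Ed d) :
    pEntry d t i j y = 2 * (d + 1) / sphereVol d * t * snocVec d y t i * snocVec d y t j /
      ‖WithLp.toLp 2 (snocVec d y t)‖ ^ (d + 3) := by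
  have h_pow : (‖y‖ ^ 2 + t ^ 2) ^ (((d : ℝ) + 3) / 2) =
      ‖WithLp.toLp 2 (snocVec d y t)‖ ^ (d + 3) := by
    rw [← norm_toLp_snocVec_sq, ← Real.rpow_natCast, ← Real.rpow_natCast,
      ← Real.rpow_mul (norm_nonneg _)]
    push_cast
    ring_nf
  rw [pEntry, h_pow]

lemma pEntry_smul (ht : 0 < t) (i j : Fin (d + 1)) (y : Ed d) :
    pEntry d t i j (t • y) = (t ^ d)⁻¹ * pEntry d 1 i j y := by
  have h_pos : 0 < ‖WithLp.toLp 2 (snocVec d y 1)‖ := norm_affineLift_pos y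
  rw [pEntry_eq, pEntry_eq, snocVec_smul, WithLp.toLp_smul, norm_smul, Real.norm_of_nonneg ht.le]
  simp only [Pi.smul_apply, smul_eq_mul]
  field_simp
  ring

lemma pKernel_apply (y : Ed d) (w : Ed (d + 1)) (i : Fin (d + 1)) :
    pKernel d y w i = ∑ j, pEntry d 1 i j y * w j := by
  simp only [pKernel, pEntry_eq, affineLift, smul_apply, InnerProductSpace.rankOne_apply,
    PiLp.smul_apply, smul_eq_mul, PiLp.inner_apply, RCLike.inner_apply, conj_trivial,
    Finset.sum_mul, Finset.mul_sum]
  exact Finset.sum_congr rfl fun j _ => by ring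

lemma pConv_eq_dilatedConv {F : Ed d → Ed (d + 1)} {p : ℝ≥0∞} (hF : MemLp F p volume)
    (hp : 1 ≤ p) (hp' : p ≠ ∞) (ht : 0 < t) (x : Ed d) :
    pConv d t F x = dilatedConv volume (pKernel d) F t x := by
  have h_int := integrable_kernel_apply_comp_sub_smul (x := x) integrable_pKernel norm_pKernel_le
    hF hp hp' ht.ne'
  ext i
  have h_scale := Measure.integral_comp_smul_of_nonneg volume
    (fun y => ∑ j, pEntry d t i j y * F (x - y) j) t (hR := ht.le)
  simp only [pEntry_smul ht, mul_assoc, ← Finset.mul_sum, ← pKernel_apply, integral_const_mul,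
    finrank_euclideanSpace_fin, smul_eq_mul] at h_scale
  calc pConv d t F x i = ∫ y, ∑ j, pEntry d t i j y * F (x - y) j := rfl
    _ = ∫ y, pKernel d y (F (x - t • y)) i :=
        (mul_left_cancel₀ (inv_ne_zero (pow_pos ht d).ne') h_scale).symm
    _ = dilatedConv volume (pKernel d) F t x i :=
        (EuclideanSpace.proj i).integral_comp_comm h_int

end PConv

/-- **Approximation-to-the-identity property of the Poisson-type kernel.**
For `1 ≤ p < ∞` and `F ∈ L^p(ℝ^d; ℝ^{d+1})`, `‖(ℙ_t ∗ F) − F‖_{L^p} → 0` as `t → 0⁺`, and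
`(ℙ_t ∗ F)(x) → F(x)` as `t → 0⁺` at every Lebesgue point `x` of `F`. -/
theorem pConv_approx_identity (d : ℕ) (p : ℝ) (hp : 1 ≤ p)
    (F : Ed d → Ed (d + 1)) (hF : MemLp F (ENNReal.ofReal p) volume) :
    Tendsto (fun t => eLpNorm (fun x => pConv d t F x - F x) (ENNReal.ofReal p) volume)
      (𝓝[>] (0 : ℝ)) (𝓝 0) ∧
    ∀ x : Ed d,
      Tendsto (fun r => ⨍ y in Metric.ball x r, ‖F y - F x‖ ∂volume) (𝓝[>] (0 : ℝ)) (𝓝 0) →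
      Tendsto (fun t => pConv d t F x) (𝓝[>] (0 : ℝ)) (𝓝 (F x)) := by
  have hp1 : 1 ≤ ENNReal.ofReal p := ENNReal.one_le_ofReal.2 hp
  have h_eq : ∀ᶠ t in 𝓝[>] (0 : ℝ), ∀ x, dilatedConv volume (pKernel d) F t x = pConv d t F x :=
    eventually_mem_nhdsWithin.mono fun t ht x =>
      (pConv_eq_dilatedConv hF hp1 ENNReal.ofReal_ne_top ht x).symm
  constructor
  · have h_norm := (tendsto_eLpNorm_dilatedConv_sub integrable_pKernel hF hp1
      ENNReal.ofReal_ne_top).mono_left (nhdsGT_le_nhdsNE 0)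
    simp only [integral_pKernel, ContinuousLinearMap.id_apply] at h_norm
    exact h_norm.congr' (h_eq.mono fun t ht => by simp only [ht])
  · intro x hx
    have h_ptwise := tendsto_dilatedConv_of_tendsto_average isSymmDecreasing_norm_pKernel
      integrable_pKernel.norm integrable_pKernel.1 (fun _ => le_rfl) hF hp1
      ENNReal.ofReal_ne_top hx
    rw [integral_pKernel, ContinuousLinearMap.id_apply] at h_ptwise
    exact h_ptwise.congr' (h_eq.mono fun t ht => ht x)
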